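/- Let d ≥ 1, let h ≥ 4 be a Hadamard order with Hadamard matrix A, and for B ∈ {−1,1}^{h×d} define C by c_{ij} = sgn((AᵀB)_{ji}), F = C A⁻¹ B, and G = F + I. Then there exists a choice of B ∈ {−1,1}^{h×d} such that det(G) ≥ μ(h)^d·(1 − d²/μ(h)). -/

import Mathlib

open Matrix

/-- The `±1` sign function: `sgn x = 1` if `x ≥ 0`, `−1` if `x < 0`. -/
noncomputable def sgn (x : ℝ) : ℝ := if 0 ≤ x then 1 else -1

/-- The `h × d` sign matrix corresponding to a Boolean matrix `b`. -/
noncomputable def signMat {h d : ℕ} (b : Fin h → Fin d → Bool) :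
    Matrix (Fin h) (Fin d) ℝ :=
  Matrix.of fun i j => if b i j then (1 : ℝ) else -1

/-- The matrix `C` with `c_{ij} = sgn((Aᵀ B)_{ji})`. -/
noncomputable def Cmat {h d : ℕ} (A : Matrix (Fin h) (Fin h) ℝ)
    (B : Matrix (Fin h) (Fin d) ℝ) : Matrix (Fin d) (Fin h) ℝ :=
  Matrix.of fun i j => sgn ((Aᵀ * B) j i)

/-- The matrix `F = C A⁻¹ B`. -/
noncomputable def Fmat {h d : ℕ} (A : Matrix (Fin h) (Fin h) ℝ)
    (B : Matrix (Fin h) (Fin d) ℝ) : Matrix (Fin d) (Fin d) ℝ :=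
  Cmat A B * A⁻¹ * B

/-- Expectation of `f(B)`, averaged over the `2^(h·d)` equally likely
`h × d` matrices `B` with entries in `{−1, 1}`. -/
noncomputable def expec (h d : ℕ) (f : Matrix (Fin h) (Fin d) ℝ → ℝ) : ℝ :=
  (∑ b : Fin h → Fin d → Bool, f (signMat b)) / 2 ^ (h * d)


/-- `μ(h) = 1 + 2^{−h} h binom(h, h/2)`. -/
noncomputable def mu (h : ℕ) : ℝ :=
  1 + (2 : ℝ) ^ (-(h : ℤ)) * h * (h.choose (h / 2) : ℝ)

/-!
Since `A⁻¹ = h⁻¹ Aᵀ`, the entries of `F` are `F i j = w (b i) ⬝ b j`, where `b j` are the columns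
of `B` and `w b = h⁻¹ A sgn(Aᵀ b)` is a subgradient, of Euclidean norm `1`, of the norm
`f b = h⁻¹ ‖Aᵀ b‖₁`. Let `B` be uniformly random. An off-diagonal entry has second moment
`‖w‖² = 1`, by averaging over `b j` alone. A diagonal entry `f (b i)` has mean `μ(h) - 1`, and its
variance is at most `1`: the subgradient controls the effect of flipping one sign, and the Poincaré
inequality on the cube gains a factor `2` because `f` is even, so that its Fourier coefficients of
level `1` vanish.

Hence `‖G - μ(h) I‖² ≤ d²` in Frobenius norm for some `B`. If `d < μ(h)`, this makes the quadratic
form of `G` coercive with constant `μ(h) - d`, so that `det G ≥ (μ(h) - d)^d`, and Bernoulli's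
inequality gives the claim. If `d ≥ μ(h)`, the claimed bound is nonpositive, while a `B` with all
columns equal has `det G ≥ 0`.
-/

open scoped BigOperators

section Determinant

variable {m n : Type*} [Fintype m] [Fintype n]

theorem dotProduct_mulVec_sq_le (E : Matrix m n ℝ) (x : m → ℝ) (y : n → ℝ) :
    (x ⬝ᵥ E *ᵥ y) ^ 2 ≤ (∑ i, ∑ j, E i j ^ 2) * ((x ⬝ᵥ x) * (y ⬝ᵥ y)) := by
  have hbilin : x ⬝ᵥ E *ᵥ y = ∑ p : m × n, E p.1 p.2 * (x p.1 * y p.2) := by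
    simp only [dotProduct, mulVec, Finset.mul_sum, Fintype.sum_prod_type]
    exact Finset.sum_congr rfl fun i _ => Finset.sum_congr rfl fun j _ => by ring
  have hnorm : (x ⬝ᵥ x) * (y ⬝ᵥ y) = ∑ p : m × n, (x p.1 * y p.2) ^ 2 := by
    simp only [dotProduct, Finset.sum_mul_sum, Fintype.sum_prod_type]
    exact Finset.sum_congr rfl fun i _ => Finset.sum_congr rfl fun j _ => by ring
  rw [hbilin, hnorm, ← Fintype.sum_prod_type']
  exact Finset.sum_mul_sq_le_sq_mul_sq _ _ _

theorem dotProduct_self_pos {x : n → ℝ} (hx : x ≠ 0) : 0 < x ⬝ᵥ x := by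
  simpa using dotProduct_star_self_pos_iff.mpr hx

variable [DecidableEq n]

theorem det_pos_of_dotProduct_mulVec_pos {M : Matrix n n ℝ}
    (hM : ∀ x, x ≠ 0 → 0 < x ⬝ᵥ M *ᵥ x) : 0 < M.det := by
  by_contra! hdet
  -- The matrices on the segment from `1` to `M` have positive definite form, so are nonsingular.
  let path : ℝ → Matrix n n ℝ := fun t => (1 - t) • 1 + t • M
  have hpath : Continuous fun t => (path t).det := by fun_prop
  obtain ⟨t, ⟨ht0, ht1⟩, ht⟩ :=
    intermediate_value_Icc' zero_le_one hpath.continuousOn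
      (show (0 : ℝ) ∈ Set.Icc (path 1).det (path 0).det by simpa [path] using hdet)
  obtain ⟨v, hv, hker⟩ := exists_mulVec_eq_zero_iff.mpr ht
  have hform : v ⬝ᵥ path t *ᵥ v = (1 - t) * (v ⬝ᵥ v) + t * (v ⬝ᵥ M *ᵥ v) := by
    simp [path, add_mulVec, smul_mulVec, dotProduct_add, dotProduct_smul]
  rw [hker, dotProduct_zero] at hform
  have hvv := dotProduct_self_pos hv
  have hMv := hM v hv
  rcases ht0.eq_or_lt with rfl | ht0
  · linarith
  · linarith [mul_nonneg (sub_nonneg.mpr ht1) hvv.le, mul_pos ht0 hMv]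

theorem pow_card_le_det_of_isHermitian {S : Matrix n n ℝ} (hS : S.IsHermitian) {c : ℝ}
    (hc : 0 ≤ c) (hcoer : ∀ x, c * (x ⬝ᵥ x) ≤ x ⬝ᵥ S *ᵥ x) : c ^ Fintype.card n ≤ S.det := by
  have heig (i : n) : c ≤ hS.eigenvalues i := by
    let v : n → ℝ := hS.eigenvectorBasis i
    have hv : v ≠ 0 := fun h =>
      hS.eigenvectorBasis.orthonormal.ne_zero i (by ext k; exact congrFun h k)
    have hrayleigh := hcoer v
    rw [hS.mulVec_eigenvectorBasis, dotProduct_smul, smul_eq_mul] at hrayleigh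
    exact le_of_mul_le_mul_right hrayleigh (dotProduct_self_pos hv)
  calc c ^ Fintype.card n = ∏ _i : n, c := by simp
    _ ≤ ∏ i, hS.eigenvalues i := Finset.prod_le_prod (fun _ _ => hc) fun i _ => heig i
    _ = S.det := by simp [hS.det_eq_prod_eigenvalues]

theorem pow_card_le_det_of_coercive {M : Matrix n n ℝ} {δ : ℝ} (hδ : 0 < δ)
    (hM : ∀ x, δ * (x ⬝ᵥ x) ≤ x ⬝ᵥ M *ᵥ x) : δ ^ Fintype.card n ≤ M.det := by
  have hdet : 0 < M.det :=
    det_pos_of_dotProduct_mulVec_pos fun x hx =>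
      (mul_pos hδ (dotProduct_self_pos hx)).trans_le (hM x)
  have hgram (x : n → ℝ) : δ ^ 2 * (x ⬝ᵥ x) ≤ x ⬝ᵥ (Mᵀ * M) *ᵥ x := by
    rw [← mulVec_mulVec, dotProduct_mulVec, vecMul_transpose]
    rcases eq_or_ne x 0 with rfl | hx
    · simp
    have hxx := dotProduct_self_pos hx
    have hcs : (x ⬝ᵥ M *ᵥ x) ^ 2 ≤ (x ⬝ᵥ x) * (M *ᵥ x ⬝ᵥ M *ᵥ x) := by
      simpa [dotProduct, sq] using Finset.sum_mul_sq_le_sq_mul_sq Finset.univ x (M *ᵥ x)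
    have hpow : (δ * (x ⬝ᵥ x)) ^ 2 ≤ (x ⬝ᵥ M *ᵥ x) ^ 2 :=
      pow_le_pow_left₀ (mul_pos hδ (hxx)).le (hM x) 2
    refine le_of_mul_le_mul_left ?_ (hxx)
    linarith
  have hsq : (δ ^ Fintype.card n) ^ 2 ≤ M.det ^ 2 := by
    calc (δ ^ Fintype.card n) ^ 2 = (δ ^ 2) ^ Fintype.card n := pow_right_comm _ _ _
      _ ≤ (Mᵀ * M).det :=
        pow_card_le_det_of_isHermitian (by simpa using isHermitian_conjTranspose_mul_self M)
          (sq_nonneg δ) hgram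
      _ = M.det ^ 2 := by rw [det_mul, det_transpose, sq]
  exact le_of_sq_le_sq hsq hdet.le

theorem sub_pow_card_le_det {M : Matrix n n ℝ} {c t : ℝ} (ht : 0 ≤ t) (htc : t < c)
    (hM : ∑ i, ∑ j, (M - c • 1) i j ^ 2 ≤ t ^ 2) : (c - t) ^ Fintype.card n ≤ M.det := by
  refine pow_card_le_det_of_coercive (sub_pos.mpr htc) fun x => ?_
  have hxx : 0 ≤ x ⬝ᵥ x := by simpa using dotProduct_star_self_nonneg x
  have hsq : (x ⬝ᵥ (M - c • 1) *ᵥ x) ^ 2 ≤ (t * (x ⬝ᵥ x)) ^ 2 := by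
    calc _ ≤ _ := dotProduct_mulVec_sq_le _ _ _
      _ ≤ t ^ 2 * ((x ⬝ᵥ x) * (x ⬝ᵥ x)) := by gcongr
      _ = _ := by ring
  have hlower := (abs_le_of_sq_le_sq' hsq (by positivity)).1
  simp only [sub_mulVec, smul_mulVec, one_mulVec, dotProduct_sub, dotProduct_smul,
    smul_eq_mul] at hlower
  linarith

end Determinant

section SignVectors

variable {ι : Type*}

/-- The `±1` vector with sign pattern `ε`. The discrete cube `{-1, 1}^ι` is encoded as the group
`ι → ℤˣ`, so that changing signs is multiplication. -/
def signVec (ε : ι → ℤˣ) : ι → ℝ := fun i => ((ε i : ℤ) : ℝ)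

@[simp]
theorem signVec_mul (ε η : ι → ℤˣ) (i : ι) :
    signVec (ε * η) i = signVec ε i * signVec η i := by
  simp [signVec]

@[simp]
theorem signVec_one (i : ι) : signVec 1 i = 1 := by
  simp [signVec]

@[simp]
theorem signVec_neg (ε : ι → ℤˣ) : signVec (-ε) = -signVec ε := by
  ext; simp [signVec]

theorem signVec_eq_one_or_neg_one (ε : ι → ℤˣ) (i : ι) : signVec ε i = 1 ∨ signVec ε i = -1 := by
  rcases Int.units_eq_one_or (ε i) with h | h <;> simp [signVec, h]

@[simp]
theorem signVec_mul_self (ε : ι → ℤˣ) (i : ι) : signVec ε i * signVec ε i = 1 := by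
  rcases signVec_eq_one_or_neg_one ε i with h | h <;> simp [h]

theorem exists_signVec_eq {v : ι → ℝ} (hv : ∀ i, v i = 1 ∨ v i = -1) :
    ∃ ε : ι → ℤˣ, signVec ε = v := by
  refine ⟨fun i => if v i = 1 then 1 else -1, funext fun i => ?_⟩
  rcases hv i with h | h <;> norm_num [signVec, h]

theorem expect_mul_left {G : Type*} [Group G] [Fintype G] (g : G) (f : G → ℝ) :
    𝔼 x, f (g * x) = 𝔼 x, f x :=
  Fintype.expect_equiv (Equiv.mulLeft g) _ _ fun _ => rfl

variable [DecidableEq ι]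

/-- The sign pattern `ε` with the sign at `i` reversed. -/
def flipAt (i : ι) (ε : ι → ℤˣ) : ι → ℤˣ := Pi.mulSingle i (-1) * ε

@[simp]
theorem flipAt_flipAt (i : ι) (ε : ι → ℤˣ) : flipAt i (flipAt i ε) = ε := by
  simp [flipAt, ← mul_assoc, ← Pi.mulSingle_mul]

theorem signVec_flipAt (i : ι) (ε : ι → ℤˣ) :
    signVec (flipAt i ε) = signVec ε - Pi.single i (2 * signVec ε i) := by
  ext j
  rcases eq_or_ne j i with rfl | hj
  · rw [flipAt, signVec_mul, Pi.sub_apply, Pi.single_eq_same]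
    simp only [signVec, Pi.mulSingle_eq_same, Units.val_neg, Units.val_one, Int.cast_neg,
      Int.cast_one]
    ring
  · simp [flipAt, signVec, hj]

variable [Fintype ι]

theorem expect_flipAt (i : ι) (f : (ι → ℤˣ) → ℝ) : 𝔼 ε, f (flipAt i ε) = 𝔼 ε, f ε :=
  expect_mul_left _ f

theorem expect_signVec_mul_signVec (i j : ι) :
    𝔼 ε, signVec ε i * signVec ε j = if i = j then 1 else 0 := by
  split_ifs with hij
  · subst hij
    simp
  · have hflip : 𝔼 ε, signVec ε i * signVec ε j = 𝔼 ε, -(signVec ε i * signVec ε j) := by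
      rw [← expect_flipAt i]
      refine Finset.expect_congr rfl fun ε _ => ?_
      simp only [signVec_flipAt, Pi.sub_apply, Pi.single_eq_same,
        Pi.single_eq_of_ne (Ne.symm hij)]
      ring
    rw [Finset.expect_neg_distrib] at hflip
    linarith

theorem expect_dotProduct_signVec_sq (v : ι → ℝ) : 𝔼 ε, (v ⬝ᵥ signVec ε) ^ 2 = v ⬝ᵥ v := by
  calc 𝔼 ε, (v ⬝ᵥ signVec ε) ^ 2
      = 𝔼 ε, ∑ i, ∑ j, v i * v j * (signVec ε i * signVec ε j) := by
        refine Finset.expect_congr rfl fun ε _ => ?_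
        simp only [sq, dotProduct, Finset.sum_mul_sum]
        exact Finset.sum_congr rfl fun i _ => Finset.sum_congr rfl fun j _ => by ring
    _ = ∑ i, ∑ j, v i * v j * 𝔼 ε, signVec ε i * signVec ε j := by
        simp only [Finset.expect_sum_comm, Finset.mul_expect]
    _ = v ⬝ᵥ v := by
        simp [expect_signVec_mul_signVec, dotProduct]

end SignVectors

section Walsh

variable {ι : Type*}

/-- The Walsh function `χ_S(ε) = ∏_{i ∈ S} ε_i`, a character of the group `ι → ℤˣ`. -/
def walsh (S : Finset ι) (ε : ι → ℤˣ) : ℝ := ∏ i ∈ S, signVec ε i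

theorem walsh_mul (S : Finset ι) (ε η : ι → ℤˣ) : walsh S (ε * η) = walsh S ε * walsh S η := by
  simp [walsh, Finset.prod_mul_distrib]

theorem walsh_mul_self (S : Finset ι) (ε : ι → ℤˣ) : walsh S ε * walsh S ε = 1 := by
  simp [walsh, ← Finset.prod_mul_distrib]

theorem walsh_neg_one (S : Finset ι) : walsh S (-1) = (-1) ^ S.card := by
  simp [walsh]

theorem walsh_mulSingle_neg_one [DecidableEq ι] (S : Finset ι) (i : ι) :
    walsh S (Pi.mulSingle i (-1)) = if i ∈ S then -1 else 1 := by
  have hcoord (j : ι) : signVec (Pi.mulSingle i (-1)) j = if j = i then -1 else 1 := by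
    rcases eq_or_ne j i with rfl | hj <;> simp [signVec, *]
  simp [walsh, hcoord, Finset.prod_ite_eq']

variable [Fintype ι]

theorem sum_walsh_mul_walsh (ε η : ι → ℤˣ) :
    ∑ S, walsh S ε * walsh S η = if ε = η then 2 ^ Fintype.card ι else 0 := by
  have hprod : ∑ S, walsh S ε * walsh S η = ∏ i, (1 + signVec ε i * signVec η i) := by
    simp [Finset.prod_one_add, walsh, Finset.prod_mul_distrib]
  rw [hprod]
  split_ifs with h
  · subst h
    norm_num
  · obtain ⟨i, hi⟩ := Function.ne_iff.mp h
    refine Finset.prod_eq_zero (Finset.mem_univ i) ?_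
    simp [signVec, Int.units_ne_iff_eq_neg.mp hi, ← Int.cast_mul, ← Units.val_mul]

variable [DecidableEq ι]

/-- The Walsh–Fourier coefficient of `f` at `S` for the uniform measure on the cube. -/
noncomputable def walshCoeff (f : (ι → ℤˣ) → ℝ) (S : Finset ι) : ℝ := 𝔼 ε, f ε * walsh S ε

theorem walshCoeff_empty (f : (ι → ℤˣ) → ℝ) : walshCoeff f ∅ = 𝔼 ε, f ε := by
  simp [walshCoeff, walsh]

theorem walshCoeff_mul_left (η : ι → ℤˣ) (f : (ι → ℤˣ) → ℝ) (S : Finset ι) :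
    walshCoeff (fun ε => f (η * ε)) S = walsh S η * walshCoeff f S := by
  rw [walshCoeff, walshCoeff, ← expect_mul_left η (fun ε => f ε * walsh S ε), Finset.mul_expect]
  refine Finset.expect_congr rfl fun ε _ => ?_
  rw [walsh_mul]
  linear_combination (-f (η * ε) * walsh S ε) * walsh_mul_self S η

theorem sum_walshCoeff_sq (f : (ι → ℤˣ) → ℝ) : ∑ S, walshCoeff f S ^ 2 = 𝔼 ε, f ε ^ 2 := by
  calc ∑ S, walshCoeff f S ^ 2
      = ∑ S, 𝔼 ε, 𝔼 η, f ε * f η * (walsh S ε * walsh S η) := by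
        refine Finset.sum_congr rfl fun S _ => ?_
        rw [sq, walshCoeff, Finset.expect_mul_expect]
        exact Finset.expect_congr rfl fun ε _ => Finset.expect_congr rfl fun η _ => by ring
    _ = 𝔼 ε, 𝔼 η, f ε * f η * ∑ S, walsh S ε * walsh S η := by
        simp only [← Finset.expect_sum_comm, Finset.mul_sum]
    _ = 𝔼 ε, f ε ^ 2 := by
        refine Finset.expect_congr rfl fun ε _ => ?_
        rw [Fintype.expect_eq_sum_div_card]
        simp [sum_walsh_mul_walsh, sq]

theorem walshCoeff_eq_zero_of_even {f : (ι → ℤˣ) → ℝ} (hf : ∀ ε, f (-ε) = f ε) {S : Finset ι}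
    (hS : Odd S.card) : walshCoeff f S = 0 := by
  have h := walshCoeff_mul_left (-1) f S
  simp only [neg_one_mul, hf, walsh_neg_one, hS.neg_one_pow] at h
  linarith

theorem walshCoeff_sub_flipAt (f : (ι → ℤˣ) → ℝ) (i : ι) (S : Finset ι) :
    walshCoeff (fun ε => f ε - f (flipAt i ε)) S = if i ∈ S then 2 * walshCoeff f S else 0 := by
  have hsub : walshCoeff (fun ε => f ε - f (flipAt i ε)) S
      = walshCoeff f S - walshCoeff (fun ε => f (flipAt i ε)) S := by
    simp only [walshCoeff, sub_mul, Finset.expect_sub_distrib]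
  rw [hsub]
  simp only [flipAt, walshCoeff_mul_left, walsh_mulSingle_neg_one]
  split_ifs <;> ring

theorem sum_expect_sub_flipAt_sq (f : (ι → ℤˣ) → ℝ) :
    ∑ i, 𝔼 ε, (f ε - f (flipAt i ε)) ^ 2 = ∑ S, 4 * S.card * walshCoeff f S ^ 2 := by
  calc ∑ i, 𝔼 ε, (f ε - f (flipAt i ε)) ^ 2
      = ∑ S, ∑ i, if i ∈ S then (2 * walshCoeff f S) ^ 2 else 0 := by
        simp only [← sum_walshCoeff_sq, walshCoeff_sub_flipAt, ite_pow, zero_pow two_ne_zero]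
        exact Finset.sum_comm
    _ = ∑ S, 4 * S.card * walshCoeff f S ^ 2 := by
        refine Finset.sum_congr rfl fun S _ => ?_
        rw [Finset.sum_ite_mem, Finset.univ_inter, Finset.sum_const, nsmul_eq_mul]
        ring

end Walsh

section Variance

theorem expect_sub_expect_sq {α : Type*} [Fintype α] [Nonempty α] (f : α → ℝ) :
    𝔼 x, (f x - 𝔼 y, f y) ^ 2 = 𝔼 x, f x ^ 2 - (𝔼 x, f x) ^ 2 := by
  simp only [sub_sq, Finset.expect_add_distrib, Finset.expect_sub_distrib, Fintype.expect_const,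
    ← Finset.expect_mul, ← Finset.mul_expect]
  ring

variable {ι : Type*} [Fintype ι] [DecidableEq ι]

theorem eight_mul_variance_le_of_even {f : (ι → ℤˣ) → ℝ} (hf : ∀ ε, f (-ε) = f ε) :
    8 * 𝔼 ε, (f ε - 𝔼 η, f η) ^ 2 ≤ ∑ i, 𝔼 ε, (f ε - f (flipAt i ε)) ^ 2 := by
  have hvar : 𝔼 ε, (f ε - 𝔼 η, f η) ^ 2 = ∑ S with S ≠ ∅, walshCoeff f S ^ 2 := by
    rw [expect_sub_expect_sq, ← sum_walshCoeff_sq, ← walshCoeff_empty, Finset.filter_ne',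
      Finset.sum_erase_eq_sub (Finset.mem_univ _)]
  rw [hvar, sum_expect_sub_flipAt_sq, Finset.mul_sum]
  refine (Finset.sum_le_sum fun S hS => ?_).trans
    (Finset.sum_le_univ_sum_of_nonneg fun S => by positivity)
  have hcard : 0 < S.card := by simpa [Finset.card_pos, Finset.nonempty_iff_ne_empty] using hS
  rcases Nat.lt_or_ge S.card 2 with hlt | hge
  · rw [walshCoeff_eq_zero_of_even hf (by rw [show S.card = 1 by omega]; exact odd_one)]
    simp
  · have hge : (2 : ℝ) ≤ S.card := by exact_mod_cast hge
    gcongr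
    linarith

theorem sub_flipAt_le {f : (ι → ℤˣ) → ℝ} {w : ι → ℝ} {ε : ι → ℤˣ}
    (hself : w ⬝ᵥ signVec ε = f ε) (hle : ∀ η, w ⬝ᵥ signVec η ≤ f η) (i : ι) :
    f ε - f (flipAt i ε) ≤ 2 * (signVec ε i * w i) := by
  have h := hle (flipAt i ε)
  rw [signVec_flipAt, dotProduct_sub, hself, dotProduct_single] at h
  linarith

theorem sub_flipAt_sq_le {f : (ι → ℤˣ) → ℝ} {w : (ι → ℤˣ) → ι → ℝ}
    (hself : ∀ ε, w ε ⬝ᵥ signVec ε = f ε) (hle : ∀ ε η, w ε ⬝ᵥ signVec η ≤ f η)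
    (ε : ι → ℤˣ) (i : ι) :
    (f ε - f (flipAt i ε)) ^ 2 ≤ 4 * w ε i ^ 2 + 4 * w (flipAt i ε) i ^ 2 := by
  have hupper := sub_flipAt_le (hself ε) (hle ε) i
  have hlower := sub_flipAt_le (hself (flipAt i ε)) (hle _) i
  rw [flipAt_flipAt] at hlower
  have hsq (η : ι → ℤˣ) : (2 * (signVec η i * w η i)) ^ 2 = 4 * w η i ^ 2 := by
    linear_combination 4 * w η i ^ 2 * signVec_mul_self η i
  rw [← hsq, ← hsq]
  rcases le_total 0 (f ε - f (flipAt i ε)) with h | h <;> nlinarith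

theorem variance_le_of_even_of_support {f : (ι → ℤˣ) → ℝ} {w : (ι → ℤˣ) → ι → ℝ} {c : ℝ}
    (hf : ∀ ε, f (-ε) = f ε) (hself : ∀ ε, w ε ⬝ᵥ signVec ε = f ε)
    (hle : ∀ ε η, w ε ⬝ᵥ signVec η ≤ f η) (hw : ∀ ε, w ε ⬝ᵥ w ε ≤ c) :
    𝔼 ε, (f ε - 𝔼 η, f η) ^ 2 ≤ c := by
  have henergy : ∑ i, 𝔼 ε, (f ε - f (flipAt i ε)) ^ 2 ≤ 8 * c := by
    calc ∑ i, 𝔼 ε, (f ε - f (flipAt i ε)) ^ 2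
        ≤ ∑ i, 𝔼 ε, (4 * w ε i ^ 2 + 4 * w (flipAt i ε) i ^ 2) := by
          gcongr with i _ ε _
          exact sub_flipAt_sq_le hself hle ε i
      _ = ∑ i, 𝔼 ε, 8 * w ε i ^ 2 := by
          refine Finset.sum_congr rfl fun i _ => ?_
          rw [Finset.expect_add_distrib, expect_flipAt i fun ε => 4 * w ε i ^ 2,
            ← Finset.expect_add_distrib]
          exact Finset.expect_congr rfl fun ε _ => by ring
      _ = 8 * 𝔼 ε, w ε ⬝ᵥ w ε := by
          simp only [dotProduct, Finset.expect_sum_comm, Finset.mul_sum, Finset.mul_expect, sq]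
      _ ≤ 8 * c := by
          gcongr
          exact Finset.expect_le Finset.univ_nonempty fun ε _ => hw ε
  linarith [eight_mul_variance_le_of_even hf]

end Variance

section FirstMoment

theorem sum_range_choose_mul_sub (n : ℕ) {j : ℕ} (hj : j ≤ n + 1) :
    ∑ k ∈ Finset.range j, (n.choose k : ℝ) * (n - 2 * k) = j * n.choose j := by
  induction j with
  | zero => simp
  | succ j ih =>
    have hstep : (n.choose (j + 1) : ℝ) * (j + 1) = n.choose j * (n - j) := by
      rw [← Nat.cast_sub (by omega)]
      exact_mod_cast Nat.choose_succ_right_eq n j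
    rw [Finset.sum_range_succ, ih (by omega)]
    push_cast
    linarith

theorem sum_range_choose_mul_abs_sub (n : ℕ) :
    ∑ k ∈ Finset.range (n + 1), (n.choose k : ℝ) * |(n : ℝ) - 2 * k|
      = 2 * ((n + 1) / 2 : ℕ) * n.choose ((n + 1) / 2) := by
  set m := (n + 1) / 2
  have hmn : m ≤ n + 1 := by omega
  have htotal := sum_range_choose_mul_sub n le_rfl
  rw [← Finset.sum_range_add_sum_Ico _ hmn, Nat.choose_succ_self, Nat.cast_zero, mul_zero,
    sum_range_choose_mul_sub n hmn] at htotal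
  have hlow : ∑ k ∈ Finset.range m, (n.choose k : ℝ) * |(n : ℝ) - 2 * k| = m * n.choose m := by
    rw [← sum_range_choose_mul_sub n hmn]
    refine Finset.sum_congr rfl fun k hk => ?_
    have hk : 2 * k ≤ n := by have := Finset.mem_range.mp hk; omega
    rw [abs_of_nonneg (sub_nonneg.mpr (by exact_mod_cast hk))]
  have hhigh : ∑ k ∈ Finset.Ico m (n + 1), (n.choose k : ℝ) * |(n : ℝ) - 2 * k|
      = -∑ k ∈ Finset.Ico m (n + 1), (n.choose k : ℝ) * (n - 2 * k) := by
    rw [← Finset.sum_neg_distrib]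
    refine Finset.sum_congr rfl fun k hk => ?_
    have hk : n ≤ 2 * k := by have := Finset.mem_Ico.mp hk; omega
    rw [abs_of_nonpos (sub_nonpos.mpr (by exact_mod_cast hk)), mul_neg]
  rw [← Finset.sum_range_add_sum_Ico _ hmn, hlow, hhigh]
  linarith

variable {ι : Type*} [Fintype ι] [DecidableEq ι]

theorem sum_apply_sum_signVec (g : ℝ → ℝ) :
    ∑ ε : ι → ℤˣ, g (∑ i, signVec ε i)
      = ∑ k ∈ Finset.range (Fintype.card ι + 1),
          ((Fintype.card ι).choose k : ℝ) * g (Fintype.card ι - 2 * k) := by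
  have hsum (S : Finset ι) :
      ∑ i, signVec (fun i => if i ∈ S then -1 else 1) i = (Fintype.card ι : ℝ) - 2 * S.card := by
    have hcoord (i : ι) : signVec (fun i => if i ∈ S then -1 else 1) i
        = 1 - 2 * if i ∈ S then (1 : ℝ) else 0 := by
      by_cases hi : i ∈ S <;> norm_num [signVec, hi]
    simp [hcoord, mul_comm]
  calc ∑ ε : ι → ℤˣ, g (∑ i, signVec ε i)
      = ∑ S : Finset ι, g (Fintype.card ι - 2 * S.card) := by
        symm
        refine Finset.sum_nbij' (fun S i => if i ∈ S then -1 else 1)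
          (fun ε => Finset.univ.filter fun i => ε i = -1) (by simp) (by simp)
          (fun S _ => ?_) (fun ε _ => ?_)
          (fun S _ => by rw [hsum])
        · ext i; by_cases hi : i ∈ S <;> simp [hi]
        · ext i; rcases Int.units_eq_one_or (ε i) with hi | hi <;> simp [hi]
    _ = _ := by
        simpa using Finset.sum_powerset_apply_card
          (fun k : ℕ => g (Fintype.card ι - 2 * k)) (x := (Finset.univ : Finset ι))

theorem expect_abs_dotProduct_signVec {v : ι → ℝ} (hv : ∀ i, v i = 1 ∨ v i = -1) :
    𝔼 ε, |v ⬝ᵥ signVec ε|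
      = 2 * ((Fintype.card ι + 1) / 2 : ℕ)
          * (Fintype.card ι).choose ((Fintype.card ι + 1) / 2) / 2 ^ Fintype.card ι := by
  obtain ⟨η, rfl⟩ := exists_signVec_eq hv
  calc 𝔼 ε, |signVec η ⬝ᵥ signVec ε|
      = 𝔼 ε, |∑ i, signVec (η * ε) i| := by simp [dotProduct]
    _ = 𝔼 ε : ι → ℤˣ, |∑ i, signVec ε i| := expect_mul_left η fun ε => |∑ i, signVec ε i|
    _ = _ := by
        rw [Fintype.expect_eq_sum_div_card, sum_apply_sum_signVec fun x => |x|,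
          sum_range_choose_mul_abs_sub]
        simp

end FirstMoment

section AverageAbs

theorem sgn_mul_self_eq_one (x : ℝ) : sgn x * sgn x = 1 := by
  unfold sgn
  split_ifs <;> simp

theorem sgn_mul_le_abs (x y : ℝ) : sgn x * y ≤ |y| := by
  unfold sgn
  split_ifs
  · simpa using le_abs_self y
  · simpa using neg_le_abs y

theorem sgn_mul_eq_abs (x : ℝ) : sgn x * x = |x| := by
  unfold sgn
  split_ifs with hx
  · simp [abs_of_nonneg hx]
  · simp [abs_of_neg (not_le.mp hx)]

variable {ι κ : Type*} [Fintype ι] [Fintype κ]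

/-- The seminorm `x ↦ h⁻¹ ‖Aᵀ x‖₁`, where `h` is the number of columns of `A`; it gives the diagonal
entries of `F = C A⁻¹ B`. -/
noncomputable def avgAbs (A : Matrix ι κ ℝ) (x : ι → ℝ) : ℝ :=
  (Fintype.card κ : ℝ)⁻¹ * ∑ k, |(Aᵀ *ᵥ x) k|

/-- The subgradient `h⁻¹ A sgn(Aᵀ x)` of `avgAbs A` at `x`; the rows of `C A⁻¹` are of this form. -/
noncomputable def avgAbsSubgrad (A : Matrix ι κ ℝ) (x : ι → ℝ) : ι → ℝ :=
  (Fintype.card κ : ℝ)⁻¹ • A *ᵥ fun k => sgn ((Aᵀ *ᵥ x) k)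

variable (A : Matrix ι κ ℝ)

theorem avgAbs_nonneg (x : ι → ℝ) : 0 ≤ avgAbs A x := by
  unfold avgAbs
  positivity

theorem avgAbs_neg (x : ι → ℝ) : avgAbs A (-x) = avgAbs A x := by
  simp [avgAbs, mulVec_neg]

theorem avgAbsSubgrad_dotProduct (x z : ι → ℝ) :
    avgAbsSubgrad A x ⬝ᵥ z
      = (Fintype.card κ : ℝ)⁻¹ * ∑ k, sgn ((Aᵀ *ᵥ x) k) * (Aᵀ *ᵥ z) k := by
  rw [avgAbsSubgrad, smul_dotProduct, dotProduct_comm, dotProduct_mulVec, ← mulVec_transpose,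
    dotProduct_comm, smul_eq_mul, dotProduct]

theorem avgAbsSubgrad_dotProduct_self (x : ι → ℝ) : avgAbsSubgrad A x ⬝ᵥ x = avgAbs A x := by
  simp [avgAbsSubgrad_dotProduct, sgn_mul_eq_abs, avgAbs]

theorem avgAbsSubgrad_dotProduct_le (x z : ι → ℝ) : avgAbsSubgrad A x ⬝ᵥ z ≤ avgAbs A z := by
  rw [avgAbsSubgrad_dotProduct, avgAbs]
  gcongr
  exact sgn_mul_le_abs _ _

variable {A} [DecidableEq κ]

theorem avgAbsSubgrad_dotProduct_avgAbsSubgrad_le_one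
    (hA : Aᵀ * A = (Fintype.card κ : ℝ) • 1) (x : ι → ℝ) :
    avgAbsSubgrad A x ⬝ᵥ avgAbsSubgrad A x ≤ 1 := by
  have htranspose : Aᵀ *ᵥ avgAbsSubgrad A x
      = ((Fintype.card κ : ℝ)⁻¹ * Fintype.card κ) • fun k => sgn ((Aᵀ *ᵥ x) k) := by
    rw [avgAbsSubgrad, mulVec_smul, mulVec_mulVec, hA, smul_mulVec, one_mulVec, smul_smul]
  have hsum : ∑ k, sgn ((Aᵀ *ᵥ x) k) * (Aᵀ *ᵥ avgAbsSubgrad A x) k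
      = ((Fintype.card κ : ℝ)⁻¹ * Fintype.card κ) * Fintype.card κ := by
    simp only [htranspose, Pi.smul_apply, smul_eq_mul, mul_left_comm (sgn _), sgn_mul_self_eq_one,
      mul_one, Finset.sum_const, Finset.card_univ, nsmul_eq_mul]
    ring
  rw [avgAbsSubgrad_dotProduct, hsum]
  rcases eq_or_ne (Fintype.card κ : ℝ) 0 with h | h <;> simp [h]

variable [DecidableEq ι]

theorem variance_avgAbs_signVec_le_one (hA : Aᵀ * A = (Fintype.card κ : ℝ) • 1) :
    𝔼 ε, (avgAbs A (signVec ε) - 𝔼 η, avgAbs A (signVec η)) ^ 2 ≤ 1 :=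
  variance_le_of_even_of_support (fun ε => by rw [signVec_neg, avgAbs_neg])
    (fun ε => avgAbsSubgrad_dotProduct_self A (signVec ε))
    (fun ε η => avgAbsSubgrad_dotProduct_le A (signVec ε) (signVec η))
    (fun ε => avgAbsSubgrad_dotProduct_avgAbsSubgrad_le_one hA (signVec ε))

theorem expect_avgAbs_signVec {h : ℕ} (heven : Even h) {A : Matrix (Fin h) (Fin h) ℝ}
    (hA : ∀ i j, A i j = 1 ∨ A i j = -1) :
    𝔼 ε, avgAbs A (signVec ε) = mu h - 1 := by
  have hhalf : (h + 1) / 2 = h / 2 := by grind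
  have htwice : 2 * ((h / 2 : ℕ) : ℝ) = h := by exact_mod_cast Nat.two_mul_div_two_of_even heven
  have hentry (k : Fin h) : 𝔼 ε, |(Aᵀ *ᵥ signVec ε) k| = h * h.choose (h / 2) / 2 ^ h := by
    have := expect_abs_dotProduct_signVec (v := Aᵀ k) fun i => hA i k
    rwa [Fintype.card_fin, hhalf, htwice] at this
  simp only [avgAbs, ← Finset.mul_expect, Finset.expect_sum_comm, hentry]
  rcases eq_or_ne h 0 with rfl | h0
  · simp [mu]
  have h0 : (h : ℝ) ≠ 0 := Nat.cast_ne_zero.mpr h0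
  rw [mu, _root_.zpow_neg, zpow_natCast, Finset.sum_const, Finset.card_univ, Fintype.card_fin,
    nsmul_eq_mul, inv_mul_cancel_left₀ h0]
  ring

end AverageAbs

section RandomMatrix

theorem expect_eq_expect_update {κ α : Type*} [Fintype κ] [DecidableEq κ] [Fintype α] [Nonempty α]
    (φ : (κ → α) → ℝ) (j : κ) : 𝔼 β, φ β = 𝔼 β, 𝔼 a, φ (Function.update β j a) := by
  have hswap : Function.Involutive
      fun p : (κ → α) × α => (Function.update p.1 j p.2, p.1 j) := fun p => by simp
  calc 𝔼 β, φ β = 𝔼 β : κ → α, 𝔼 _a : α, φ β := by simp only [Fintype.expect_const]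
    _ = 𝔼 p : (κ → α) × α, φ p.1 := by simp [← Finset.univ_product_univ, Finset.expect_product]
    _ = 𝔼 p : (κ → α) × α, φ (Function.update p.1 j p.2) :=
      Fintype.expect_equiv hswap.toPerm _ _ fun p => by simp
    _ = _ := by rw [← Finset.univ_product_univ, Finset.expect_product]

/-- The `±1` matrix whose `j`-th column has sign pattern `β j`. -/
def signCols {ι κ : Type*} (β : κ → ι → ℤˣ) : Matrix ι κ ℝ := (Matrix.of fun j => signVec (β j))ᵀ

variable {h d : ℕ} {A : Matrix (Fin h) (Fin h) ℝ}

theorem Fmat_apply (h0 : h ≠ 0) (hA : Aᵀ * A = (h : ℝ) • 1) (B : Matrix (Fin h) (Fin d) ℝ)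
    (i j : Fin d) : Fmat A B i j = avgAbsSubgrad A (Bᵀ i) ⬝ᵥ Bᵀ j := by
  have hinv : A⁻¹ = (h : ℝ)⁻¹ • Aᵀ := by
    refine inv_eq_left_inv ?_
    rw [smul_mul, hA, smul_smul, inv_mul_cancel₀ (Nat.cast_ne_zero.mpr h0), one_smul]
  rw [avgAbsSubgrad_dotProduct, Fmat, hinv, Matrix.mul_smul, smul_mul, Matrix.mul_assoc]
  simp [Matrix.mul_apply, Cmat, mulVec, dotProduct]

theorem Fmat_signCols_apply (h0 : h ≠ 0) (hA : Aᵀ * A = (h : ℝ) • 1) (β : Fin d → Fin h → ℤˣ)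
    (i j : Fin d) :
    Fmat A (signCols β) i j = avgAbsSubgrad A (signVec (β i)) ⬝ᵥ signVec (β j) :=
  Fmat_apply h0 hA _ i j

theorem expect_Fmat_add_one_sub_mu_sq_le_one (h0 : h ≠ 0) (heven : Even h)
    (hsign : ∀ i j, A i j = 1 ∨ A i j = -1) (hA : Aᵀ * A = (h : ℝ) • 1) (i j : Fin d) :
    𝔼 β, (Fmat A (signCols β) + 1 - mu h • 1) i j ^ 2 ≤ 1 := by
  have hA' : Aᵀ * A = (Fintype.card (Fin h) : ℝ) • 1 := by rwa [Fintype.card_fin]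
  simp only [Matrix.sub_apply, Matrix.add_apply, Matrix.smul_apply, Fmat_signCols_apply h0 hA]
  rw [expect_eq_expect_update _ j]
  refine Finset.expect_le Finset.univ_nonempty fun β _ => ?_
  rcases eq_or_ne i j with rfl | hij
  · have hvar := variance_avgAbs_signVec_le_one hA'
    rw [expect_avgAbs_signVec heven hsign] at hvar
    have hentry (ε : Fin h → ℤˣ) :
        avgAbs A (signVec ε) + 1 - mu h * 1 = avgAbs A (signVec ε) - (mu h - 1) := by ring
    simpa only [Function.update_self, avgAbsSubgrad_dotProduct_self, Matrix.one_apply_eq,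
      smul_eq_mul, hentry] using hvar
  · simp only [Function.update_self, Function.update_of_ne hij, Matrix.one_apply_ne hij, add_zero,
      smul_zero, sub_zero, expect_dotProduct_signVec_sq]
    exact avgAbsSubgrad_dotProduct_avgAbsSubgrad_le_one hA' _

theorem exists_signCols_sum_sq_le (h0 : h ≠ 0) (heven : Even h)
    (hsign : ∀ i j, A i j = 1 ∨ A i j = -1) (hA : Aᵀ * A = (h : ℝ) • 1) :
    ∃ β : Fin d → Fin h → ℤˣ,
      ∑ i, ∑ j, (Fmat A (signCols β) + 1 - mu h • 1) i j ^ 2 ≤ (d : ℝ) ^ 2 := by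
  have hexp : 𝔼 β : Fin d → Fin h → ℤˣ,
      ∑ i, ∑ j, (Fmat A (signCols β) + 1 - mu h • 1) i j ^ 2 ≤ (d : ℝ) ^ 2 := by
    calc _ = ∑ i : Fin d, ∑ j : Fin d,
          𝔼 β, (Fmat A (signCols β) + 1 - mu h • 1) i j ^ 2 := by
            simp only [Finset.expect_sum_comm]
      _ ≤ ∑ _i : Fin d, ∑ _j : Fin d, (1 : ℝ) := by
            gcongr with i _ j _
            exact expect_Fmat_add_one_sub_mu_sq_le_one h0 heven hsign hA i j
      _ = (d : ℝ) ^ 2 := by simp [sq]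
  obtain ⟨β, -, hβ⟩ := Finset.exists_le_of_expect_le Finset.univ_nonempty hexp
  exact ⟨β, hβ⟩

theorem det_Fmat_signCols_const_add_one_nonneg (h0 : h ≠ 0) (hA : Aᵀ * A = (h : ℝ) • 1)
    (ε : Fin h → ℤˣ) : 0 ≤ (Fmat A (signCols fun _ : Fin d => ε) + 1).det := by
  have hrank : Fmat A (signCols fun _ : Fin d => ε)
      = (replicateCol Unit fun _ => avgAbs A (signVec ε) : Matrix (Fin d) Unit ℝ)
        * (replicateRow Unit 1 : Matrix Unit (Fin d) ℝ) := by
    ext i j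
    simp [Fmat_signCols_apply h0 hA, avgAbsSubgrad_dotProduct_self, Matrix.mul_apply]
  rw [hrank, add_comm, det_one_add_replicateCol_mul_replicateRow]
  simp only [dotProduct, Pi.one_apply, one_mul, Finset.sum_const, Finset.card_univ,
    Fintype.card_fin, nsmul_eq_mul]
  have := avgAbs_nonneg A (signVec ε)
  positivity

end RandomMatrix

theorem one_le_mu (h : ℕ) : 1 ≤ mu h := by
  unfold mu
  exact le_add_of_nonneg_right (by positivity)

theorem pow_mul_one_sub_le_sub_pow {a c : ℝ} (ha : 0 < a) (hca : c ≤ 2 * a) (n : ℕ) :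
    a ^ n * (1 - n * c / a) ≤ (a - c) ^ n := by
  have hbernoulli : 1 + n * -(c / a) ≤ (1 + -(c / a)) ^ n :=
    one_add_mul_le_pow (neg_le_neg ((div_le_iff₀ ha).mpr hca)) n
  calc a ^ n * (1 - n * c / a) = a ^ n * (1 + n * -(c / a)) := by ring
    _ ≤ a ^ n * (1 + -(c / a)) ^ n := by gcongr
    _ = (a - c) ^ n := by rw [← mul_pow]; congr 1; field_simp; ring

/-- Let `d ≥ 1`, let `h ≥ 4` be a Hadamard order with Hadamard matrix `A`
(so `4 ∣ h`), and for `B ∈ {−1,1}^{h×d}` set `C = sgn(AᵀB)ᵀ`,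
`F = C A⁻¹ B`, `G = F + I`.  Then there exists a choice of `B` such that
`det G ≥ μ(h)^d (1 − d²/μ(h))`. -/
theorem exists_B_det_G_lower_bound_Chebyshev (h d : ℕ)
    (h4 : 4 ∣ h) (hh : 4 ≤ h) (hd : 1 ≤ d)
    (A : Matrix (Fin h) (Fin h) ℝ)
    (hA1 : ∀ i j, A i j = 1 ∨ A i j = -1)
    (hA2 : Aᵀ * A = (h : ℝ) • 1) :
    ∃ B : Matrix (Fin h) (Fin d) ℝ,
      (∀ i j, B i j = 1 ∨ B i j = -1) ∧
      (Fmat A B + 1).det ≥ mu h ^ d * (1 - (d : ℝ) ^ 2 / mu h) := by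
  have h0 : h ≠ 0 := by omega
  have heven : Even h := even_iff_two_dvd.mpr (dvd_trans (by norm_num) h4)
  have hmu := one_le_mu h
  have hmu_pos : 0 < mu h := by linarith
  have hentries (β : Fin d → Fin h → ℤˣ) (i : Fin h) (j : Fin d) :
      signCols β i j = 1 ∨ signCols β i j = -1 :=
    signVec_eq_one_or_neg_one (β j) i
  rcases lt_or_ge (d : ℝ) (mu h) with hlt | hge
  · obtain ⟨β, hβ⟩ := exists_signCols_sum_sq_le h0 heven hA1 hA2
    refine ⟨signCols β, hentries β, ?_⟩
    calc mu h ^ d * (1 - (d : ℝ) ^ 2 / mu h)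
        ≤ (mu h - d) ^ d := by
          simpa only [sq] using pow_mul_one_sub_le_sub_pow hmu_pos (c := d) (by linarith) d
      _ ≤ (Fmat A (signCols β) + 1).det := by
          simpa only [Fintype.card_fin] using sub_pow_card_le_det d.cast_nonneg hlt hβ
  · refine ⟨signCols fun _ => 1, hentries _, ?_⟩
    have hneg : 1 - (d : ℝ) ^ 2 / mu h ≤ 0 :=
      sub_nonpos.mpr ((one_le_div hmu_pos).mpr (by nlinarith))
    exact (mul_nonpos_of_nonneg_of_nonpos (by positivity) hneg).trans
      (det_Fmat_signCols_const_add_one_nonneg h0 hA2 1)
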